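/- Fix l ≥ 1 and κ = (k_1,…,k_l) ∈ (ℤ/2ℤ)^l, and let λ = (λ^{(1)},…,λ^{(l)}) be an l-multipartition of d. Then the degree of the row-reading standard tableau t^λ is exactly deg(t^λ) = Σ_{m=1}^{l} Σ_{a ≥ 1} ⌊λ^{(m)}_a / 2⌋ + Σ_{j=1}^{l−1} Σ_{m=j+1}^{l} n_{k_m}(λ^{(j)}), where n_i(μ) denotes the number of i-nodes in the Young diagram of a partition μ. -/

import Mathlib

/-!
Core definitions: multipartitions, Young diagrams, tableaux, degrees,
in quantum characteristic 2 (residues in ℤ/2ℤ).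
Nodes are 0-indexed: the node `(m, a, b)` denotes the box in component `m`,
row `a+1`, column `b+1` of the paper's 1-indexed conventions.
-/

/-- A node: (component, row, column), all 0-indexed. -/
abbrev Node (l : ℕ) := Fin l × ℕ × ℕ

namespace Cyclo

variable {l d : ℕ}

/-- Residue of a node `(m, a, b)`: `κ m + (b - a)` in `ℤ/2ℤ`. -/
def res (κ : Fin l → ZMod 2) (N : Node l) : ZMod 2 :=
  κ N.1 + (N.2.2 : ZMod 2) - (N.2.1 : ZMod 2)

/-- A set of nodes is (the Young diagram of) a multipartition iff it is
downward closed in rows and columns within each component. -/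
def IsDiagram (Y : Set (Node l)) : Prop :=
  ∀ m a b a' b', (m, a, b) ∈ Y → a' ≤ a → b' ≤ b → (m, a', b') ∈ Y

/-- `M` is an addable node for the diagram `Y`. -/
def Addable (Y : Set (Node l)) (M : Node l) : Prop :=
  M ∉ Y ∧ IsDiagram (insert M Y)

/-- `M` is a removable node of the diagram `Y`. -/
def Removable (Y : Set (Node l)) (M : Node l) : Prop :=
  M ∈ Y ∧ IsDiagram (Y \ {M})

/-- `M` is below `N`: strictly later component, or same component and strictly lower row. -/
def Below (N M : Node l) : Prop :=
  N.1 < M.1 ∨ (N.1 = M.1 ∧ N.2.1 < M.2.1)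

/-- `d_N(Y)`: number of addable nodes for `Y` below `N` of the same residue as `N`,
minus the number of removable nodes of `Y` below `N` of the same residue as `N`. -/
noncomputable def dN (κ : Fin l → ZMod 2) (Y : Set (Node l)) (N : Node l) : ℤ :=
  ({M | Addable Y M ∧ res κ M = res κ N ∧ Below N M}.ncard : ℤ)
    - ({M | Removable Y M ∧ res κ M = res κ N ∧ Below N M}.ncard : ℤ)

/-- The Young diagram of the multipartition whose parts are `lam m a` (0-indexed rows). -/
def diagram (lam : Fin l → ℕ → ℕ) : Set (Node l) :=
  {N | N.2.2 < lam N.1 N.2.1}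

/-- `lam` encodes an `l`-multipartition of `d`: each component is a partition
(antitone, vanishing beyond row `d`) and the sizes sum to `d`. -/
def IsMultipartition (lam : Fin l → ℕ → ℕ) (d : ℕ) : Prop :=
  (∀ m, Antitone (lam m)) ∧ (∀ m a, d ≤ a → lam m a = 0) ∧
    ∑ m : Fin l, ∑ a ∈ Finset.range d, lam m a = d

/-- A λ-tableau, encoded by the function sending `r : Fin d` to the node
occupied by the entry `r + 1`: a bijective filling of the diagram by `1, …, d`. -/
def IsTableau (lam : Fin l → ℕ → ℕ) (t : Fin d → Node l) : Prop :=
  Function.Injective t ∧ Set.range t = diagram lam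

/-- A standard λ-tableau: entries increase along rows and down columns of each
component. -/
def IsStandard (lam : Fin l → ℕ → ℕ) (t : Fin d → Node l) : Prop :=
  IsTableau lam t ∧
    ∀ r s : Fin d, (t r).1 = (t s).1 → (t r).2.1 ≤ (t s).2.1 →
      (t r).2.2 ≤ (t s).2.2 → r ≤ s

/-- Lexicographic (row-reading) order on nodes. -/
def NodeLt (N M : Node l) : Prop :=
  N.1 < M.1 ∨ (N.1 = M.1 ∧ (N.2.1 < M.2.1 ∨ (N.2.1 = M.2.1 ∧ N.2.2 < M.2.2)))

/-- The row-reading tableau `t^λ`: entries `1, …, d` are filled along successive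
rows of the components of `λ`, taking the components in order. -/
def IsRowReading (lam : Fin l → ℕ → ℕ) (t : Fin d → Node l) : Prop :=
  IsTableau lam t ∧ ∀ r s : Fin d, r < s → NodeLt (t r) (t s)

/-- The degree of a (standard) tableau: `deg t = Σ_r d_{N_r}(shape of t_{≤ r})`,
which unfolds the recursion `deg t = d_N(λ) + deg (t_{≤ d-1})`, `deg ∅ = 0`. -/
noncomputable def deg (κ : Fin l → ZMod 2) (t : Fin d → Node l) : ℤ :=
  ∑ r : Fin d, dN κ (t '' {s | s ≤ r}) (t r)

/-- `ε` of a single partition (the sum of `⌊λ_a/2⌋` over rows), as a natural number. -/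
def epsPart (d : ℕ) (p : ℕ → ℕ) : ℕ :=
  ∑ a ∈ Finset.range d, p a / 2

/-- `n_i` of a single partition `p` placed in a component with offset `k`:
the number of nodes `(a,b)` of `p` with `k + b - a = i` in `ℤ/2ℤ`. -/
noncomputable def nNodes (k i : ZMod 2) (p : ℕ → ℕ) : ℕ :=
  {N : ℕ × ℕ | N.2 < p N.1 ∧ k + (N.2 : ZMod 2) - (N.1 : ZMod 2) = i}.ncard

/-- The parity `ε(λ)` of an `l`-multipartition. -/
noncomputable def eps (κ : Fin l → ZMod 2) (d : ℕ) (lam : Fin l → ℕ → ℕ) : ZMod 2 :=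
  ((∑ m : Fin l, epsPart d (lam m) : ℕ) : ZMod 2) +
    ((∑ j : Fin l, ∑ m : Fin l, if j < m then nNodes (κ j) (κ m) (lam j) else 0 : ℕ) : ZMod 2)

end Cyclo

/-!
Reading `λ` row by row, at the moment a node `N = (m, a, b)` is filled nothing below `N` is filled
yet. Hence there are no removable nodes below `N`, and the addable ones are the first node of row
`a + 1` in component `m`, whose residue agrees with that of `N` iff the 0-indexed column `b` is odd,
and the corners of the components `m' > m`, whose residues are `κ m'`. Summing over all `N`, the
former contribute `⌊λ_a / 2⌋` for each row, and the latter are counted by `n_{κ m'}(λ^(m))`.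
-/

namespace Cyclo

open Finset

variable {l d : ℕ} (κ : Fin l → ZMod 2) {lam : Fin l → ℕ → ℕ} {t : Fin d → Node l}
  {Y : Set (Node l)} {N : Node l}

section Degree

lemma res_corner (m : Fin l) : res κ (m, 0, 0) = κ m := by
  simp [res]

lemma res_next_row_eq_iff (N : Node l) :
    res κ (N.1, N.2.1 + 1, 0) = res κ N ↔ Odd N.2.2 := by
  have cancel : ∀ k a b : ZMod 2, k + 0 - (a + 1) = k + b - a ↔ b = 1 := by decide
  simp only [res, Nat.cast_zero, Nat.cast_add, Nat.cast_one, cancel, ZMod.natCast_eq_one_iff_odd]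

lemma isDiagram_diagram (hlam : ∀ m, Antitone (lam m)) : IsDiagram (diagram lam) :=
  fun m _ _ _ _ hmem ha hb => hb.trans_lt (lt_of_lt_of_le hmem (hlam m ha))

lemma IsDiagram.insert {m : Fin l} {a b : ℕ} (hY : IsDiagram Y)
    (hcorner : ∀ a' ≤ a, ∀ b' ≤ b, (a', b') ≠ (a, b) → (m, a', b') ∈ Y) :
    IsDiagram (insert (m, a, b) Y) := by
  rintro m' p q p' q' (heq | hmem) hp hq
  · obtain ⟨rfl, rfl, rfl⟩ : m' = m ∧ p = a ∧ q = b := by simpa using heq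
    by_cases hne : (p', q') = (p, q)
    · exact Or.inl (by rw [hne])
    · exact Or.inr (hcorner p' hp q' hq hne)
  · exact Or.inr (hY m' p q p' q' hmem hp hq)

lemma addable_corner (hY : IsDiagram Y) {m : Fin l} (hm : (m, 0, 0) ∉ Y) :
    Addable Y (m, 0, 0) :=
  ⟨hm, hY.insert fun a' ha b' hb hne => absurd (by simp_all) hne⟩

lemma addable_next_row (hY : IsDiagram Y) {m : Fin l} {a b : ℕ} (hN : (m, a, b) ∈ Y)
    (hnext : (m, a + 1, 0) ∉ Y) : Addable Y (m, a + 1, 0) := by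
  refine ⟨hnext, hY.insert fun a' ha b' hb hne => hY m a b a' b' hN ?_ (by omega)⟩
  have : a' ≠ a + 1 := by rintro rfl; exact hne (by simp_all)
  omega

lemma Addable.eq_of_le {m : Fin l} {a b a' b' : ℕ} (hM : Addable Y (m, a, b)) (ha : a' ≤ a)
    (hb : b' ≤ b) (hnot : (m, a', b') ∉ Y) : (m, a, b) = (m, a', b') :=
  ((hM.2 m a b a' b' (Set.mem_insert _ _) ha hb).resolve_right hnot).symm

lemma addable_and_below_iff (hY : IsDiagram Y) (hN : N ∈ Y) (hlast : ∀ M ∈ Y, ¬ Below N M)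
    (M : Node l) :
    Addable Y M ∧ Below N M ↔ M = (N.1, N.2.1 + 1, 0) ∨ ∃ m, N.1 < m ∧ (m, 0, 0) = M := by
  have hnot : ∀ {M}, Below N M → M ∉ Y := fun hbelow hmem => hlast _ hmem hbelow
  constructor
  · obtain ⟨m, a, b⟩ := M
    rintro ⟨hadd, hm | ⟨rfl, ha⟩⟩
    · exact Or.inr ⟨m, hm, (hadd.eq_of_le a.zero_le b.zero_le (hnot (Or.inl hm))).symm⟩
    · exact Or.inl (hadd.eq_of_le ha b.zero_le (hnot (Or.inr ⟨rfl, Nat.lt_succ_self _⟩)))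
  · rintro (rfl | ⟨m, hm, rfl⟩)
    · have hbelow : Below N (N.1, N.2.1 + 1, 0) := Or.inr ⟨rfl, Nat.lt_succ_self _⟩
      exact ⟨addable_next_row hY hN (hnot hbelow), hbelow⟩
    · exact ⟨addable_corner hY (hnot (Or.inl hm)), Or.inl hm⟩

lemma setOf_addable_below_eq (hY : IsDiagram Y) (hN : N ∈ Y)
    (hlast : ∀ M ∈ Y, ¬ Below N M) :
    {M | Addable Y M ∧ res κ M = res κ N ∧ Below N M} =
      {M | M = (N.1, N.2.1 + 1, 0) ∧ Odd N.2.2} ∪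
        (fun m => ((m, 0, 0) : Node l)) '' {m | N.1 < m ∧ res κ N = κ m} := by
  ext M
  have hiff := addable_and_below_iff hY hN hlast M
  simp only [Set.mem_ofPred_eq, Set.mem_union, Set.mem_image]
  rw [and_comm (a := res κ M = _), ← and_assoc, hiff, or_and_right]
  refine or_congr (and_congr_right ?_) ⟨?_, ?_⟩
  · rintro rfl
    exact res_next_row_eq_iff κ N
  · rintro ⟨⟨m, hm, rfl⟩, hres⟩
    exact ⟨m, ⟨hm, by rw [← hres, res_corner]⟩, rfl⟩
  · rintro ⟨m, ⟨hm, hres⟩, rfl⟩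
    exact ⟨⟨m, hm, rfl⟩, by rw [hres, res_corner]⟩

lemma dN_eq_of_forall_not_below (hY : IsDiagram Y) (hN : N ∈ Y)
    (hlast : ∀ M ∈ Y, ¬ Below N M) :
    dN κ Y N = (if Odd N.2.2 then 1 else 0) + (#{m | N.1 < m ∧ res κ N = κ m} : ℤ) := by
  have hremovable : {M | Removable Y M ∧ res κ M = res κ N ∧ Below N M} = ∅ :=
    Set.eq_empty_of_forall_notMem fun M hM => hlast M hM.1.1 hM.2.2
  have hdisjoint : Disjoint {M : Node l | M = (N.1, N.2.1 + 1, 0) ∧ Odd N.2.2}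
      ((fun m => ((m, 0, 0) : Node l)) '' {m | N.1 < m ∧ res κ N = κ m}) := by
    rw [Set.disjoint_left]
    rintro _ ⟨rfl, -⟩ ⟨m, -, hm⟩
    simp at hm
  have hcorners : ((fun m => ((m, 0, 0) : Node l)) '' {m | N.1 < m ∧ res κ N = κ m}).ncard =
      #{m | N.1 < m ∧ res κ N = κ m} := by
    rw [Set.ncard_image_of_injective _ fun m m' h => congrArg Prod.fst h,
      ← Set.ncard_coe_finset, coe_filter_univ]
  have hnext : {M : Node l | M = (N.1, N.2.1 + 1, 0) ∧ Odd N.2.2}.ncard =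
      if Odd N.2.2 then 1 else 0 := by
    split_ifs with hodd <;> simp [hodd]
  rw [dN, hremovable, setOf_addable_below_eq κ hY hN hlast,
    Set.ncard_union_eq hdisjoint ((Set.finite_singleton _).subset fun _ h => h.1) (Set.toFinite _),
    hcorners, hnext]
  simp

end Degree

section RowReading

lemma IsRowReading.isStandard (ht : IsRowReading lam t) : IsStandard lam t := by
  refine ⟨ht.1, fun r s hcomp hrow hcol => ?_⟩
  by_contra! hlt
  have := ht.2 s r hlt
  simp only [NodeLt, hcomp, lt_irrefl, false_or, true_and] at this
  omega

lemma IsRowReading.not_below (ht : IsRowReading lam t) {r s : Fin d} (hsr : s ≤ r) :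
    ¬ Below (t r) (t s) := by
  intro hbelow
  rcases hsr.eq_or_lt with rfl | hlt
  · simp [Below] at hbelow
  · have := ht.2 s r hlt
    simp only [NodeLt, Below, Fin.lt_def, Fin.ext_iff] at this hbelow
    omega

lemma IsStandard.isDiagram_image_le (hlam : ∀ m, Antitone (lam m)) (ht : IsStandard lam t)
    (r : Fin d) : IsDiagram (t '' {s | s ≤ r}) := by
  rintro m a b a' b' ⟨s, hs, hts⟩ ha hb
  have hmem : (m, a, b) ∈ diagram lam := ht.1.2 ▸ hts ▸ Set.mem_range_self s
  obtain ⟨s', hts'⟩ : (m, a', b') ∈ Set.range t :=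
    ht.1.2 ▸ isDiagram_diagram hlam m a b a' b' hmem ha hb
  have hle : s' ≤ s := ht.2 s' s (by simp [hts, hts']) (by simpa [hts, hts']) (by simpa [hts, hts'])
  exact ⟨s', hle.trans hs, hts'⟩

lemma IsRowReading.deg_eq (hlam : ∀ m, Antitone (lam m)) (ht : IsRowReading lam t) :
    deg κ t =
      (#{r | Odd (t r).2.2} : ℤ) + (∑ r, #{m | (t r).1 < m ∧ res κ (t r) = κ m} : ℕ) := by
  have hterm (r : Fin d) := dN_eq_of_forall_not_below κ (ht.isStandard.isDiagram_image_le hlam r)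
    (Set.mem_image_of_mem t (le_refl r)) (by rintro _ ⟨s, hs, rfl⟩; exact ht.not_below hs)
  rw [deg, sum_congr rfl fun r _ => hterm r, sum_add_distrib, sum_boole,
    Nat.cast_sum]

end RowReading

section Counting

lemma card_filter_odd_range (n : ℕ) : #{b ∈ range n | Odd b} = n / 2 := by
  rw [← Nat.card_multiples n 2]
  simp only [← even_iff_two_dvd, Nat.even_add_one, Nat.not_even_iff_odd]

lemma IsTableau.mem_diagram (ht : IsTableau lam t) (r : Fin d) : t r ∈ diagram lam :=
  ht.2 ▸ Set.mem_range_self r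

lemma IsTableau.exists_eq (ht : IsTableau lam t) (hN : N ∈ diagram lam) : ∃ r, t r = N :=
  (ht.2.symm ▸ hN : N ∈ Set.range t)

lemma IsTableau.card_filter_odd_row (ht : IsTableau lam t) (m : Fin l) (a : ℕ) :
    #{r | Odd (t r).2.2 ∧ (t r).1 = m ∧ (t r).2.1 = a} = lam m a / 2 := by
  rw [← card_filter_odd_range]
  refine card_nbij (fun r => (t r).2.2) ?_ ?_ ?_
  · intro r hr
    obtain ⟨hodd, rfl, rfl⟩ := by simpa using hr
    simpa [hodd, diagram] using ht.mem_diagram r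
  · intro r hr s hs hcol
    simp only [coe_filter_univ, Set.mem_ofPred_eq] at hr hs
    exact ht.1 (Prod.ext (hr.2.1.trans hs.2.1.symm)
      (Prod.ext (hr.2.2.trans hs.2.2.symm) hcol))
  · intro b hb
    obtain ⟨hlt, hodd⟩ := by simpa using hb
    obtain ⟨r, hr⟩ := ht.exists_eq (N := (m, a, b)) hlt
    exact ⟨r, by simp [hr, hodd], by simp [hr]⟩

lemma IsTableau.card_filter_odd (ht : IsTableau lam t) (hlam : ∀ m a, d ≤ a → lam m a = 0) :
    #{r | Odd (t r).2.2} = ∑ m, epsPart d (lam m) := by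
  have hrow (r : Fin d) : (t r).2.1 < d := by
    by_contra! hle
    have := ht.mem_diagram r
    simp [diagram, hlam _ _ hle] at this
  rw [card_eq_sum_card_fiberwise (f := fun r => ((t r).1, (t r).2.1)) (t := univ ×ˢ range d)
    (fun r _ => by simpa using hrow r), sum_product]
  simp only [epsPart, filter_filter, Prod.mk.injEq, ht.card_filter_odd_row]

lemma IsTableau.card_filter_res (ht : IsTableau lam t) (j : Fin l) (i : ZMod 2) :
    #{r | (t r).1 = j ∧ res κ (t r) = i} = nNodes (κ j) i (lam j) := by
  have hinj : Set.InjOn (fun r => (t r).2) {r | (t r).1 = j ∧ res κ (t r) = i} :=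
    fun r hr s hs heq => ht.1 (Prod.ext (hr.1.trans hs.1.symm) heq)
  rw [nNodes, ← Set.ncard_coe_finset, coe_filter_univ, ← hinj.ncard_image]
  congr 1
  ext ⟨a, b⟩
  constructor
  · rintro ⟨r, ⟨rfl, rfl⟩, hr⟩
    have hmem := ht.mem_diagram r
    simp_all [diagram, res]
  · rintro ⟨hmem, hres⟩
    obtain ⟨r, hr⟩ := ht.exists_eq (N := (j, a, b)) hmem
    exact ⟨r, by simpa [hr, res] using hres, by simp [hr]⟩

lemma IsTableau.sum_card_later_components (ht : IsTableau lam t) :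
    ∑ r, #{m | (t r).1 < m ∧ res κ (t r) = κ m} =
      ∑ j, ∑ m, if j < m then nNodes (κ j) (κ m) (lam j) else 0 := by
  rw [← sum_fiberwise univ fun r => (t r).1]
  refine sum_congr rfl fun j _ => ?_
  calc ∑ r with (t r).1 = j, #{m | (t r).1 < m ∧ res κ (t r) = κ m}
      = ∑ r with (t r).1 = j, ∑ m, if j < m then if res κ (t r) = κ m then 1 else 0 else 0 :=
        sum_congr rfl fun r hr => by
          simp only [(mem_filter.1 hr).2, card_filter, ite_and]
    _ = ∑ m, ∑ r with (t r).1 = j, if j < m then if res κ (t r) = κ m then 1 else 0 else 0 :=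
        sum_comm
    _ = ∑ m, if j < m then nNodes (κ j) (κ m) (lam j) else 0 :=
        sum_congr rfl fun m _ => by
          simp only [← ht.card_filter_res κ, sum_ite_irrel, sum_const_zero, sum_boole,
            filter_filter, Nat.cast_id]

end Counting

end Cyclo

open Cyclo in
/-- For an `l`-multipartition `λ` of `d` (`l ≥ 1`), the degree
of the row-reading standard tableau `t^λ` equals exactly
`Σ_m Σ_a ⌊λ^(m)_a / 2⌋ + Σ_{j < m} n_{k_m}(λ^(j))`. -/
theorem statement1 (l d : ℕ) (hl : 1 ≤ l)
    (κ : Fin l → ZMod 2) (lam : Fin l → ℕ → ℕ)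
    (hlam : IsMultipartition lam d)
    (t : Fin d → Node l) (ht : IsRowReading lam t) :
    deg κ t =
      ((∑ m : Fin l, epsPart d (lam m) : ℕ) : ℤ) +
      ((∑ j : Fin l, ∑ m : Fin l, if j < m then nNodes (κ j) (κ m) (lam j) else 0 : ℕ) : ℤ) := by
  rw [ht.deg_eq κ hlam.1, ht.1.card_filter_odd hlam.2.1, ht.1.sum_card_later_components κ]
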